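/- For every n ≥ 0, the arm graph A_n has cop number 1; indeed, a single cop starting at the vertex b_2^{-1} has a winning strategy against the robber on A_n. -/

import Mathlib

open SimpleGraph

/-! ### Pursuit games on graphs

A round of the game is recorded as a pair `(c, r)` where `c : Fin k → V` is the
configuration of the `k` pursuers (cops or zombies) and `r : V` the position of the
evader (robber or survivor).  In a round the pursuers move first (knowing the full
history), then the evader moves (knowing the full history and the pursuers' new
configuration).  Strategies are functions of the full history, so no generality is lost. -/

/-- The history of a play: the list of (pursuer configuration, evader position) pairs
for the completed rounds so far. -/
abbrev GameHist (V : Type*) (k : ℕ) := List ((Fin k → V) × V)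

/-- The history determined by the sequences `c` (pursuer configurations) and `r`
(evader positions), recording rounds `0, …, n-1`. -/
def histUpTo {V : Type*} {k : ℕ} (c : ℕ → Fin k → V) (r : ℕ → V) (n : ℕ) : GameHist V k :=
  (List.range n).map fun i => (c i, r i)

/-- The robber/survivor always moves along an edge or stays still. -/
def RobberLegal {V : Type*} (G : SimpleGraph V) (r : ℕ → V) : Prop :=
  ∀ n, r (n+1) = r n ∨ G.Adj (r n) (r (n+1))

/-- At step `n`, each cop stays still or moves along an edge. -/
def CopStepLegal {V : Type*} (G : SimpleGraph V) {k : ℕ} (c : ℕ → Fin k → V) (n : ℕ) : Prop :=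
  ∀ i, c (n+1) i = c n i ∨ G.Adj (c n i) (c (n+1) i)

/-- At step `n`, each zombie moves along an edge to a vertex strictly closer to the
survivor's current position `r n`. -/
def ZombieStepLegal {V : Type*} (G : SimpleGraph V) {k : ℕ} (c : ℕ → Fin k → V) (r : ℕ → V)
    (n : ℕ) : Prop :=
  ∀ i, G.Adj (c n i) (c (n+1) i) ∧ G.dist (c (n+1) i) (r n) < G.dist (c n i) (r n)

/-- The pursuers follow the history-dependent strategy `mv`: their configuration at time
`n+1` is the strategy applied to the history of rounds `0, …, n`. -/
def FollowsStrat {V : Type*} {k : ℕ} (mv : GameHist V k → Fin k → V)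
    (c : ℕ → Fin k → V) (r : ℕ → V) : Prop :=
  ∀ n, c (n+1) = mv (histUpTo c r (n+1))

/-- Starting from the cop configuration `cpos` (the robber then chooses any starting
vertex, and the cops move first), the cops have a strategy catching the robber: in every
play consistent with the strategy there is a time at which some cop and the robber occupy
the same vertex, all cop moves made up to and including the capturing move being legal. -/
def CopsCatchFrom {V : Type*} (G : SimpleGraph V) {k : ℕ} (cpos : Fin k → V) : Prop :=
  ∃ mv : GameHist V k → Fin k → V,
    ∀ (c : ℕ → Fin k → V) (r : ℕ → V),
      c 0 = cpos → FollowsStrat mv c r → RobberLegal G r →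
      ∃ n, ((∃ i, c n i = r n) ∧ ∀ m < n, CopStepLegal G c m) ∨
           ((∃ i, c (n+1) i = r n) ∧ ∀ m ≤ n, CopStepLegal G c m)

/-- `k` cops have a winning strategy on `G`. -/
def CopsWinWith {V : Type*} (G : SimpleGraph V) (k : ℕ) : Prop :=
  ∃ cpos : Fin k → V, CopsCatchFrom G cpos

/-- The cop number of `G`: the least `k` such that `k` cops have a winning strategy. -/
noncomputable def copNumber {V : Type*} (G : SimpleGraph V) : ℕ :=
  sInf {k | CopsWinWith G k}

/-- Starting from the zombie configuration `zpos` and survivor position `spos`, with the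
zombies to move, the zombies have a strategy catching the survivor: in every play
consistent with the strategy there is a time at which some zombie and the survivor occupy
the same vertex, all zombie moves made up to and including the capturing move being legal
(each zombie moves along an edge, strictly decreasing its distance to the survivor). -/
def ZombiesCatchFrom {V : Type*} (G : SimpleGraph V) {k : ℕ} (zpos : Fin k → V) (spos : V) :
    Prop :=
  ∃ mv : GameHist V k → Fin k → V,
    ∀ (c : ℕ → Fin k → V) (r : ℕ → V),
      c 0 = zpos → r 0 = spos → FollowsStrat mv c r → RobberLegal G r →
      ∃ n, ((∃ i, c n i = r n) ∧ ∀ m < n, ZombieStepLegal G c r m) ∨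
           ((∃ i, c (n+1) i = r n) ∧ ∀ m ≤ n, ZombieStepLegal G c r m)

/-- `k` zombies have a winning strategy on `G`: they can choose starting vertices so that
wherever the survivor starts, they catch the survivor. -/
def ZombiesWinWith {V : Type*} (G : SimpleGraph V) (k : ℕ) : Prop :=
  ∃ zpos : Fin k → V, ∀ spos : V, ZombiesCatchFrom G zpos spos

/-- The zombie number of `G`: the least `k` such that `k` zombies have a winning strategy. -/
noncomputable def zombieNumber {V : Type*} (G : SimpleGraph V) : ℕ :=
  sInf {k | ZombiesWinWith G k}

/-- Starting from the zombie configuration `zpos` and survivor position `spos`, with the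
zombies to move, the survivor has a strategy evading capture forever: in every play where
the survivor follows the strategy and the zombies move legally, the survivor's moves are
legal and no zombie ever occupies the survivor's vertex. -/
def SurvivorEvadesFrom {V : Type*} (G : SimpleGraph V) {k : ℕ} (zpos : Fin k → V) (spos : V) :
    Prop :=
  ∃ mv : GameHist V k → (Fin k → V) → V,
    ∀ (c : ℕ → Fin k → V) (r : ℕ → V),
      c 0 = zpos → r 0 = spos →
      (∀ n, r (n+1) = mv (histUpTo c r (n+1)) (c (n+1))) →
      (∀ n, ZombieStepLegal G c r n) →
      RobberLegal G r ∧ ∀ n, (∀ i, c n i ≠ r n) ∧ (∀ i, c (n+1) i ≠ r n)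

/-- Zombie-move legality in the variant where in each round the survivor moves first:
at step `n` each zombie moves along an edge, strictly decreasing its distance to the
survivor's current position `r (n+1)`. -/
def ZombieStepLegalAfter {V : Type*} (G : SimpleGraph V) {k : ℕ} (c : ℕ → Fin k → V)
    (r : ℕ → V) (n : ℕ) : Prop :=
  ∀ i, G.Adj (c n i) (c (n+1) i) ∧ G.dist (c (n+1) i) (r (n+1)) < G.dist (c n i) (r (n+1))

/-- Starting from the zombie configuration `zpos` and survivor position `spos`, with the
survivor to move (the zombies then responding each round), the zombies have a strategy
catching the survivor. -/
def ZombiesCatchFromSurvivorToMove {V : Type*} (G : SimpleGraph V) {k : ℕ}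
    (zpos : Fin k → V) (spos : V) : Prop :=
  ∃ mv : GameHist V k → V → Fin k → V,
    ∀ (c : ℕ → Fin k → V) (r : ℕ → V),
      c 0 = zpos → r 0 = spos →
      (∀ n, c (n+1) = mv (histUpTo c r (n+1)) (r (n+1))) →
      RobberLegal G r →
      ∃ n, (∃ i, c 0 i = r 0) ∨
           ((∃ i, c n i = r (n+1)) ∧ ∀ m < n, ZombieStepLegalAfter G c r m) ∨
           ((∃ i, c (n+1) i = r (n+1)) ∧ ∀ m ≤ n, ZombieStepLegalAfter G c r m)

/-! ### The graphs `T_x`, the arm graphs `A_n`, and attaching an arm to a graph -/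

/-- `|i - j| = 1 or 4` for `i j : Fin 5`, i.e. `i` and `j` are cyclically consecutive. -/
def fin5adj (i j : Fin 5) : Prop :=
  ((i : ℕ) + 1) % 5 = (j : ℕ) ∨ ((j : ℕ) + 1) % 5 = (i : ℕ)

/-- The vertices of the arm graph `A_n`: the vertex `b₂⁻¹` (`start`), the vertex `b₀ⁿ`
(`finish`), and for each copy `T_x` (`x : Fin n`) the inside vertices `a_i^x`
(`inner x i`), the outside vertices `b_i^x` (`outer x i`) and the center `c^x`
(`center x`). -/
inductive ArmVert (n : ℕ) : Type
  | start : ArmVert n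
  | finish : ArmVert n
  | inner : Fin n → Fin 5 → ArmVert n
  | outer : Fin n → Fin 5 → ArmVert n
  | center : Fin n → ArmVert n
  deriving DecidableEq

/-- One direction of the edge relation of the arm graph `A_n`. -/
def armRel (n : ℕ) : ArmVert n → ArmVert n → Prop
  | .inner x i, .inner y j => x = y ∧ fin5adj i j
  | .outer x i, .outer y j => (x = y ∧ fin5adj i j) ∨ ((x : ℕ) + 1 = (y : ℕ) ∧ (i : ℕ) = 2 ∧ (j : ℕ) = 0)
  | .inner x i, .outer y j => x = y ∧ (i = j ∨ fin5adj i j)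
  | .inner x _, .center y => x = y
  | .start, .outer y j => (y : ℕ) = 0 ∧ (j : ℕ) = 0
  | .outer x i, .finish => (x : ℕ) + 1 = n ∧ (i : ℕ) = 2
  | .start, .finish => n = 0
  | _, _ => False

/-- The arm graph `A_n`. -/
def armGraph (n : ℕ) : SimpleGraph (ArmVert n) := SimpleGraph.fromRel (armRel n)

/-- The index of the copy `T_x` containing a vertex of `A_n` (if any). -/
def copyIdx {n : ℕ} : ArmVert n → Option (Fin n)
  | .inner x _ => some x
  | .outer x _ => some x
  | .center x => some x
  | _ => none

/-- The vertex `b₀ˣ` of `A_n` (for `x = n` this is the final vertex `b₀ⁿ`). -/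
def b0 (n x : ℕ) : ArmVert n :=
  if h : x < n then ArmVert.outer ⟨x, h⟩ 0 else ArmVert.finish

/-- The vertex `b₂^{x-1}` of `A_n` (for `x = 0` this is the vertex `b₂⁻¹`). -/
def b2prev (n x : ℕ) : ArmVert n :=
  if h : 1 ≤ x ∧ x - 1 < n then ArmVert.outer ⟨x - 1, h.2⟩ 2 else ArmVert.start

/-- The vertex lies in the copy `T_x`. -/
def InCopy {W : Type*} {n : ℕ} (x : ℕ) (u : W ⊕ ArmVert n) : Prop :=
  ∃ (a : ArmVert n) (y : Fin n), u = Sum.inr a ∧ copyIdx a = some y ∧ (y : ℕ) = x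

/-- One direction of the edge relation of the graph obtained from a graph `H` and the
arm `A_n` by adding an edge from the vertex `b₂⁻¹` of `A_n` to the vertex `v` of `H`. -/
def combRel {W : Type*} (H : SimpleGraph W) (v : W) (n : ℕ) :
    (W ⊕ ArmVert n) → (W ⊕ ArmVert n) → Prop
  | Sum.inl w, Sum.inl w' => H.Adj w w'
  | Sum.inr a, Sum.inr a' => (armGraph n).Adj a a'
  | Sum.inl w, Sum.inr a => w = v ∧ a = ArmVert.start
  | _, _ => False

/-- The graph obtained from `H` and the arm `A_n` by adding an edge from the vertex
`b₂⁻¹` of `A_n` to the vertex `v` of `H`. -/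
def combGraph {W : Type*} (H : SimpleGraph W) (v : W) (n : ℕ) :
    SimpleGraph (W ⊕ ArmVert n) :=
  SimpleGraph.fromRel (combRel H v n)

/-! ### The graphs `Z_{k,m}(H)` -/

/-- The vertices of `Z_{k,m}(H)` where `H` has vertex type `W` and `p = 4*(m-k)`:
the vertices of `H`, for each vertex of `H` a path on `p` vertices, and for each
vertex of `H` `m` copies of the arm graph `A_p`. -/
abbrev ZVert (W : Type*) (m p : ℕ) : Type _ := W ⊕ (W × Fin p) ⊕ (W × Fin m × ArmVert p)

/-- One direction of the edge relation of `Z_{k,m}(H)`. -/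
def zRel {W : Type*} (H : SimpleGraph W) (m p : ℕ) : ZVert W m p → ZVert W m p → Prop
  | Sum.inl w, Sum.inl w' => H.Adj w w'
  | Sum.inl w, Sum.inr (Sum.inl (w', j)) => w = w' ∧ (j : ℕ) = 0
  | Sum.inr (Sum.inl (w, j)), Sum.inr (Sum.inl (w', j')) => w = w' ∧ (j : ℕ) + 1 = (j' : ℕ)
  | Sum.inl w, Sum.inr (Sum.inr (w', _, a)) => w = w' ∧ a = ArmVert.start
  | Sum.inr (Sum.inr (w, i, a)), Sum.inr (Sum.inr (w', i', a')) =>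
      w = w' ∧ i = i' ∧ (armGraph p).Adj a a'
  | _, _ => False

/-- The graph `Z_{k,m}(H)`: to each vertex `v` of `H` we attach (by an edge from `v` to
the first path vertex, resp. to `b₂⁻¹`) one path on `4*(m-k)` vertices and `m` copies of
the arm graph `A_{4*(m-k)}`. -/
def ZGraph {W : Type*} (H : SimpleGraph W) (k m : ℕ) :
    SimpleGraph (ZVert W m (4 * (m - k))) :=
  SimpleGraph.fromRel (zRel H m (4 * (m - k)))

/-! ### Hypercubes and block intersection graphs -/

/-- The `n`-dimensional hypercube: vertices are `Fin n → Bool`, two vertices being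
adjacent exactly when they differ in exactly one coordinate. -/
def hypercube (n : ℕ) : SimpleGraph (Fin n → Bool) :=
  SimpleGraph.fromRel fun x y => ∃ i, x i ≠ y i ∧ ∀ j, j ≠ i → x j = y j

/-- `(P, B)` is a balanced incomplete block design with parameters `(v, k, 1)`:
`P` has `v` points, every block has `k` points, and every pair of distinct points lies
in exactly one block. -/
def IsBIBD (P : Type*) (B : Finset (Finset P)) (v k : ℕ) : Prop :=
  Nat.card P = v ∧ (∀ b ∈ B, b.card = k) ∧
    ∀ p q : P, p ≠ q → ∃! b : Finset P, b ∈ B ∧ p ∈ b ∧ q ∈ b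

/-- The block intersection graph of a collection `B` of blocks: vertices are the blocks,
two distinct blocks being adjacent exactly when they intersect. -/
def blockGraph {P : Type*} (B : Finset (Finset P)) : SimpleGraph {b // b ∈ B} :=
  SimpleGraph.fromRel fun b b' => ∃ p, p ∈ b.val ∧ p ∈ b'.val

/-! ### Zombie-good positions on a graph with an attached arm -/

/-- A position (with the zombies to move) in the game on the graph obtained by attaching
the arm `A_n` to `H` at `v` is `x`-zombie-good if: the survivor is in some `T_y` with
`y ≥ x` or at `b₀ⁿ`; for some `i ≥ 1` the zombies `z_1, …, z_i` are all at `b₀ˣ`; the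
remaining zombies are in `H ∪ {b₂⁻¹} ∪ T_0 ∪ ⋯ ∪ T_{x-1}`; consecutive zombie distances
to the survivor satisfy `0 ≤ d_{j+1} - d_j ≤ 4`; and `d_m - d_1 ≥ n - x`. -/
def ZombieGood {W : Type*} (H : SimpleGraph W) (v : W) (n m x : ℕ)
    (zpos : Fin m → (W ⊕ ArmVert n)) (spos : W ⊕ ArmVert n) : Prop :=
  (∃ a : ArmVert n, spos = Sum.inr a ∧
      ((∃ y : Fin n, copyIdx a = some y ∧ x ≤ (y : ℕ)) ∨ a = ArmVert.finish)) ∧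
  (∃ i : ℕ, 1 ≤ i ∧ i ≤ m ∧
      (∀ j : Fin m, (j : ℕ) < i → zpos j = Sum.inr (b0 n x)) ∧
      (∀ j : Fin m, i ≤ (j : ℕ) →
        (∃ w, zpos j = Sum.inl w) ∨ zpos j = Sum.inr ArmVert.start ∨
          (∃ (a : ArmVert n) (y : Fin n), zpos j = Sum.inr a ∧ copyIdx a = some y ∧ (y : ℕ) < x))) ∧
  (∀ j : Fin m, ∀ h : (j : ℕ) + 1 < m,
      (combGraph H v n).dist spos (zpos j) ≤ (combGraph H v n).dist spos (zpos ⟨(j : ℕ) + 1, h⟩) ∧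
      (combGraph H v n).dist spos (zpos ⟨(j : ℕ) + 1, h⟩) - (combGraph H v n).dist spos (zpos j) ≤ 4) ∧
  (∀ hm : 1 ≤ m,
      n - x ≤ (combGraph H v n).dist spos (zpos ⟨m - 1, by omega⟩) -
        (combGraph H v n).dist spos (zpos ⟨0, by omega⟩))
/-!
A dismantling of a graph peels off its vertices in decreasing order of a rank, folding each vertex
onto a lower one that dominates it among the vertices not yet peeled off. Folding a vertex `v` until
its rank is at most `k` gives its `k`-shadow: the `0`-shadow is the root, and once `k` bounds the
ranks, `v` is its own `k`-shadow. Since the `k`-shadow and the `(k + 1)`-shadow of adjacent vertices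
are equal or adjacent, a cop starting at the root can occupy the `k`-shadow of the robber after her
`k`-th move, and so she ends up on the robber himself.

The arm graph is dismantled copy by copy, from `b₀ⁿ` down: in `T_x` fold first `b_i` onto `a_i` for
`i ≠ 0`, then `a₂, a₃` onto `c`, then `a₁, a₄, c` onto `a₀`, then `a₀` onto `b₀`, and finally `b₀`
onto `b₂` of the preceding copy.
-/

open Relation

section CopNumber

variable {V : Type*} {G : SimpleGraph V}

theorem not_copsWinWith_zero [Nonempty V] : ¬ CopsWinWith G 0 := by
  rintro ⟨cpos, mv, hmv⟩
  let v : V := Classical.arbitrary V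
  obtain ⟨_, ⟨⟨i, _⟩, _⟩ | ⟨⟨i, _⟩, _⟩⟩ := hmv (fun _ => cpos) (fun _ => v) rfl
    (fun _ => Subsingleton.elim _ _) (fun _ => .inl rfl)
  all_goals exact i.elim0

theorem copNumber_eq_one_of_copsCatchFrom {cpos : Fin 1 → V} (h : CopsCatchFrom G cpos) :
    copNumber G = 1 := by
  have : Nonempty V := ⟨cpos 0⟩
  have one_wins : CopsWinWith G 1 := ⟨cpos, h⟩
  refine le_antisymm (Nat.sInf_le one_wins) (le_csInf ⟨1, one_wins⟩ fun k hk => ?_)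
  refine Nat.one_le_iff_ne_zero.mpr ?_
  rintro rfl
  exact not_copsWinWith_zero hk

/-- In round `k + 1` the cop moves to `F (k + 1) r`, where `r` is the position of the robber. -/
theorem copsCatchFrom_of_shadows {p : V} (F : ℕ → V → V) (hF_zero : ∀ v, F 0 v = p)
    (hF_succ : ∀ k {u v}, ReflGen G.Adj u v → ReflGen G.Adj (F k u) (F (k + 1) v))
    {N : ℕ} (hF_self : ∀ v, F N v = v) :
    CopsCatchFrom G (fun _ : Fin 1 => p) := by
  refine ⟨fun hist _ => hist.getLast?.elim p fun round => F hist.length round.2, ?_⟩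
  intro c r hc_zero hc hr
  have cop_succ (n : ℕ) (i : Fin 1) : c (n + 1) i = F (n + 1) (r n) := by
    rw [hc n]
    simp [histUpTo, List.range_succ]
  have legal (n : ℕ) : CopStepLegal G c n := by
    intro i
    rw [← reflGen_iff]
    cases n with
    | zero =>
      rw [cop_succ, hc_zero, ← hF_zero (r 0)]
      exact hF_succ 0 .refl
    | succ n =>
      rw [cop_succ, cop_succ]
      exact hF_succ (n + 1) ((reflGen_iff _ _ _).mpr (hr n))
  cases N with
  | zero =>
    refine ⟨0, .inl ⟨⟨0, ?_⟩, fun m _ => legal m⟩⟩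
    rw [hc_zero, ← hF_zero (r 0), hF_self]
  | succ N =>
    refine ⟨N, .inr ⟨⟨0, ?_⟩, fun m _ => legal m⟩⟩
    rw [cop_succ, hF_self]

end CopNumber

section Dismantling

variable {V : Type*} {G : SimpleGraph V} {root : V}

/-- `v` dominates `u` among the vertices of rank at most that of `u`: every such vertex in the
closed neighbourhood of `u` is in that of `v`. Closed neighbourhoods are expressed by
`Relation.ReflGen G.Adj`. -/
def DominatesBelow (G : SimpleGraph V) (rank : V → ℕ) (v u : V) : Prop :=
  ∀ ⦃w⦄, rank w ≤ rank u → ReflGen G.Adj u w → ReflGen G.Adj v w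

theorem DominatesBelow.of_adj {rank : V → ℕ} {u v : V} (hvu : G.Adj v u)
    (h : ∀ w, rank w ≤ rank u → G.Adj u w → ReflGen G.Adj v w) : DominatesBelow G rank v u := by
  rintro w hw (_ | huw)
  · exact .single hvu
  · exact h w hw huw

/-- A dismantling of `G` onto the vertex `root`. Classical dismantling orders are those with
injective `rank`; here vertices of equal rank are folded simultaneously. -/
structure Dismantling (G : SimpleGraph V) (root : V) where
  rank : V → ℕ
  fold : V → V
  eq_root_of_rank_eq_zero : ∀ {v}, rank v = 0 → v = root
  rank_fold_lt : ∀ {v}, rank v ≠ 0 → rank (fold v) < rank v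
  dominatesBelow_fold : ∀ {v}, rank v ≠ 0 → DominatesBelow G rank (fold v) v

namespace Dismantling

variable (D : Dismantling G root)

/-- The `k`-shadow of `v`: the first vertex of rank at most `k` among its iterated folds. -/
def shadow (k : ℕ) (v : V) : V :=
  if D.rank v ≤ k then v else shadow k (D.fold v)
termination_by D.rank v
decreasing_by exact D.rank_fold_lt (by omega)

theorem shadow_of_rank_le {k : ℕ} {v : V} (hv : D.rank v ≤ k) : D.shadow k v = v := by
  rw [shadow, if_pos hv]

theorem shadow_of_lt_rank {k : ℕ} {v : V} (hv : k < D.rank v) :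
    D.shadow k v = D.shadow k (D.fold v) := by
  rw [shadow, if_neg hv.not_ge]

theorem shadow_zero (v : V) : D.shadow 0 v = root := by
  fun_induction D.shadow 0 v with
  | case1 v hv => exact D.eq_root_of_rank_eq_zero (Nat.le_zero.mp hv)
  | case2 _ _ ih => exact ih

/-- Whichever of `u` and `v` has the larger rank can be folded, unless both equal their shadows. -/
theorem reflGen_adj_shadow_shadow_succ (k : ℕ) {u v : V} (huv : ReflGen G.Adj u v) :
    ReflGen G.Adj (D.shadow k u) (D.shadow (k + 1) v) := by
  have := G.symm
  induction hs : D.rank u + D.rank v using Nat.strong_induction_on generalizing u v with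
  | _ s ih =>
    subst hs
    by_cases hu : k < D.rank u ∧ D.rank v ≤ D.rank u
    · have hlt := D.rank_fold_lt (v := u) (by omega)
      have hadj := D.dominatesBelow_fold (v := u) (by omega) hu.2 huv
      rw [D.shadow_of_lt_rank hu.1]
      exact ih _ (by omega) hadj rfl
    by_cases hv : k + 1 < D.rank v
    · have hlt := D.rank_fold_lt (v := v) (by omega)
      have hadj := D.dominatesBelow_fold (v := v) (by omega) (by omega : D.rank u ≤ _) (symm huv)
      rw [D.shadow_of_lt_rank hv]
      exact ih _ (by omega) (symm hadj) rfl
    · rwa [D.shadow_of_rank_le (by omega), D.shadow_of_rank_le (by omega)]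

theorem copsCatchFrom {N : ℕ} (hN : ∀ v, D.rank v ≤ N) :
    CopsCatchFrom G (fun _ : Fin 1 => root) :=
  copsCatchFrom_of_shadows D.shadow D.shadow_zero D.reflGen_adj_shadow_shadow_succ
    fun v => D.shadow_of_rank_le (hN v)

end Dismantling

end Dismantling

section ArmGraph

instance : DecidableRel fin5adj := fun i j =>
  inferInstanceAs (Decidable (((i : ℕ) + 1) % 5 = (j : ℕ) ∨ ((j : ℕ) + 1) % 5 = (i : ℕ)))

theorem fin5adj_comm {i j : Fin 5} : fin5adj i j ↔ fin5adj j i := or_comm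

theorem not_fin5adj_self (i : Fin 5) : ¬ fin5adj i i := by
  decide +revert

variable {n : ℕ} {x y : Fin n} {i j : Fin 5}

theorem armGraph_adj_inner_inner :
    (armGraph n).Adj (.inner x i) (.inner y j) ↔ x = y ∧ fin5adj i j := by
  have := not_fin5adj_self i
  have := @fin5adj_comm i j
  simp only [armGraph, fromRel_adj, armRel, ne_eq, ArmVert.inner.injEq]
  grind

theorem armGraph_adj_inner_outer :
    (armGraph n).Adj (.inner x i) (.outer y j) ↔ x = y ∧ (i = j ∨ fin5adj i j) := by
  simp [armGraph, armRel]

theorem armGraph_adj_inner_center :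
    (armGraph n).Adj (.inner x i) (.center y) ↔ x = y := by
  simp [armGraph, armRel]

theorem armGraph_adj_outer_outer :
    (armGraph n).Adj (.outer x i) (.outer y j) ↔ x = y ∧ fin5adj i j ∨
      (x : ℕ) + 1 = y ∧ i = 2 ∧ j = 0 ∨ (y : ℕ) + 1 = x ∧ j = 2 ∧ i = 0 := by
  have := not_fin5adj_self i
  have := @fin5adj_comm i j
  simp only [armGraph, fromRel_adj, armRel, ne_eq, ArmVert.outer.injEq, Fin.ext_iff]
  grind

theorem armGraph_adj_start_outer :
    (armGraph n).Adj .start (.outer x i) ↔ (x : ℕ) = 0 ∧ i = 0 := by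
  simp [armGraph, armRel]

theorem armGraph_adj_outer_finish :
    (armGraph n).Adj (.outer x i) .finish ↔ (x : ℕ) + 1 = n ∧ i = 2 := by
  simp [armGraph, armRel, Fin.ext_iff]

theorem not_armGraph_adj_outer_center : ¬ (armGraph n).Adj (.outer x i) (.center y) := by
  simp [armGraph, armRel]

theorem eq_of_armGraph_adj_inner {w : ArmVert n} (h : (armGraph n).Adj (.inner x i) w) :
    (∃ j, w = .inner x j ∧ fin5adj i j) ∨ (∃ j, w = .outer x j ∧ (i = j ∨ fin5adj i j)) ∨
      w = .center x := by
  cases w with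
  | inner y j =>
    obtain ⟨rfl, hij⟩ := armGraph_adj_inner_inner.mp h
    exact .inl ⟨j, rfl, hij⟩
  | outer y j =>
    obtain ⟨rfl, hij⟩ := armGraph_adj_inner_outer.mp h
    exact .inr (.inl ⟨j, rfl, hij⟩)
  | center y =>
    obtain rfl := armGraph_adj_inner_center.mp h
    exact .inr (.inr rfl)
  | _ => simp [armGraph, armRel] at h

theorem exists_eq_inner_of_armGraph_adj_center {w : ArmVert n}
    (h : (armGraph n).Adj (.center x) w) : ∃ i, w = .inner x i := by
  cases w with
  | inner y i =>
    obtain rfl := armGraph_adj_inner_center.mp h.symm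
    exact ⟨i, rfl⟩
  | _ => simp [armGraph, armRel] at h

theorem b2prev_zero (n : ℕ) : b2prev n 0 = .start := by
  simp [b2prev]

theorem b2prev_succ (x : Fin n) : b2prev n (x + 1) = .outer x 2 := by
  simp [b2prev]

theorem armGraph_adj_b2prev_b0 {x : ℕ} (hx : x ≤ n) :
    (armGraph n).Adj (b2prev n x) (b0 n x) := by
  cases x with
  | zero =>
    rw [b2prev_zero, b0]
    split_ifs with hn
    · simp [armGraph_adj_start_outer]
    · simp [armGraph, armRel, Nat.eq_zero_of_not_pos hn]
  | succ x =>
    rw [b2prev_succ ⟨x, hx⟩, b0]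
    split_ifs with hn
    · simp [armGraph_adj_outer_outer]
    · simp [armGraph_adj_outer_finish, Nat.le_antisymm hx (not_lt.mp hn)]

/-- The rank of `a_i` in the dismantling of the arm graph, relative to its copy. -/
def innerLevel : Fin 5 → ℕ := ![2, 3, 4, 4, 3]

/-- The rank of the dismantling of the arm graph: the copies are peeled off from last to first, five
ranks per copy. -/
def armRank (n : ℕ) : ArmVert n → ℕ
  | .start => 0
  | .finish => 5 * n + 1
  | .outer x i => if i = 0 then 5 * x + 1 else 5 * x + 5
  | .inner x i => 5 * x + innerLevel i
  | .center x => 5 * x + 3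

/-- The fold of the dismantling of the arm graph. Its value at the root `b₂⁻¹` is immaterial. -/
def armFold (n : ℕ) : ArmVert n → ArmVert n
  | .start => .start
  | .finish => b2prev n n
  | .outer x i => if i = 0 then b2prev n x else .inner x i
  | .inner x i => ![.outer x 0, .inner x 0, .center x, .center x, .inner x 0] i
  | .center x => .inner x 0

theorem armRank_le (v : ArmVert n) : armRank n v ≤ 5 * n + 1 := by
  cases v with
  | outer x i => grind [armRank]
  | inner x i => fin_cases i <;> simp [armRank, innerLevel] <;> omega
  | _ => simp only [armRank]; omega

theorem eq_start_of_armRank_eq_zero {v : ArmVert n} (hv : armRank n v = 0) : v = .start := by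
  cases v with
  | start => rfl
  | outer x i => grind [armRank]
  | inner x i => fin_cases i <;> simp [armRank, innerLevel] at hv
  | _ => simp [armRank] at hv

theorem armRank_outer_zero (x : Fin n) : armRank n (.outer x 0) = 5 * x + 1 := rfl

theorem armRank_outer_of_ne_zero (x : Fin n) (hi : i ≠ 0) :
    armRank n (.outer x i) = 5 * x + 5 := if_neg hi

theorem eq_zero_of_armRank_outer_lt (h : armRank n (.outer x i) < 5 * x + 5) : i = 0 := by
  by_contra hi
  exact h.ne (armRank_outer_of_ne_zero x hi)

theorem armRank_b2prev_le (n x : ℕ) : armRank n (b2prev n x) ≤ 5 * x := by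
  unfold b2prev
  split_ifs with hx
  · rw [armRank_outer_of_ne_zero _ (by decide)]
    grind
  · exact Nat.zero_le _

theorem armRank_armFold_lt {v : ArmVert n} (hv : armRank n v ≠ 0) :
    armRank n (armFold n v) < armRank n v := by
  cases v with
  | start => exact absurd rfl hv
  | finish => exact Nat.lt_succ_of_le (armRank_b2prev_le n n)
  | outer x i =>
    by_cases hi : i = 0
    · subst hi
      exact Nat.lt_succ_of_le (armRank_b2prev_le n x)
    · rw [armRank_outer_of_ne_zero x hi, armFold, if_neg hi]
      fin_cases i <;> simp [armRank, innerLevel]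
  | inner x i => fin_cases i <;> simp [armRank, innerLevel, armFold]
  | center x => simp [armRank, innerLevel, armFold]

theorem b2prev_dominatesBelow_finish :
    DominatesBelow (armGraph n) (armRank n) (b2prev n n) .finish := by
  have hadj := armGraph_adj_b2prev_b0 (le_refl n)
  rw [b0, dif_neg (lt_irrefl n)] at hadj
  refine .of_adj hadj fun w _ h => ?_
  suffices w = b2prev n n by rw [this]
  cases w with
  | start =>
    obtain rfl : n = 0 := by simpa [armGraph, armRel] using h
    exact (b2prev_zero 0).symm
  | outer y j =>
    obtain ⟨hy, rfl⟩ := armGraph_adj_outer_finish.mp h.symm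
    rw [← b2prev_succ y, hy]
  | _ => simp [armGraph, armRel] at h

theorem b2prev_dominatesBelow_outer_zero (x : Fin n) :
    DominatesBelow (armGraph n) (armRank n) (b2prev n x) (.outer x 0) := by
  have hadj := armGraph_adj_b2prev_b0 x.is_lt.le
  rw [b0, dif_pos x.is_lt] at hadj
  refine .of_adj hadj fun w hw h => ?_
  rw [armRank_outer_zero] at hw
  suffices w = b2prev n x by rw [this]
  cases w with
  | start =>
    obtain ⟨hx, -⟩ := armGraph_adj_start_outer.mp h.symm
    rw [hx, b2prev_zero]
  | finish => exact absurd (armGraph_adj_outer_finish.mp h).2 (by decide)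
  | outer y j =>
    obtain ⟨rfl, hj⟩ | ⟨-, h02, -⟩ | ⟨hy, rfl, -⟩ := armGraph_adj_outer_outer.mp h
    · obtain rfl := eq_zero_of_armRank_outer_lt (hw.trans_lt (by omega))
      exact absurd hj (not_fin5adj_self 0)
    · exact absurd h02 (by decide)
    · rw [← hy, b2prev_succ]
  | inner y j =>
    obtain ⟨rfl, -⟩ := armGraph_adj_inner_outer.mp h.symm
    have no_lower : ∀ j, ¬ innerLevel j ≤ 1 := by decide
    exact absurd (by simpa [armRank] using hw) (no_lower j)
  | center y => exact absurd h not_armGraph_adj_outer_center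

theorem inner_dominatesBelow_outer (x : Fin n) (hi : i ≠ 0) :
    DominatesBelow (armGraph n) (armRank n) (.inner x i) (.outer x i) := by
  refine .of_adj (armGraph_adj_inner_outer.mpr ⟨rfl, .inl rfl⟩) fun w hw h => ?_
  rw [armRank_outer_of_ne_zero x hi] at hw
  cases w with
  | start => exact absurd (armGraph_adj_start_outer.mp h.symm).2 hi
  | finish =>
    simp only [armRank] at hw
    omega
  | outer y j =>
    obtain ⟨rfl, hij⟩ | ⟨hy, -, rfl⟩ | ⟨-, -, rfl⟩ := armGraph_adj_outer_outer.mp h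
    · exact .single (armGraph_adj_inner_outer.mpr ⟨rfl, .inr hij⟩)
    · rw [armRank_outer_zero] at hw
      omega
    · exact absurd rfl hi
  | inner y j =>
    obtain ⟨rfl, rfl | hji⟩ := armGraph_adj_inner_outer.mp h.symm
    · exact .refl
    · exact .single (armGraph_adj_inner_inner.mpr ⟨rfl, fin5adj_comm.mp hji⟩)
  | center y => exact absurd h not_armGraph_adj_outer_center

theorem outer_zero_dominatesBelow_inner_zero (x : Fin n) :
    DominatesBelow (armGraph n) (armRank n) (.outer x 0) (.inner x 0) := by
  refine .of_adj (armGraph_adj_inner_outer.mpr ⟨rfl, .inl rfl⟩).symm fun w hw h => ?_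
  change armRank n w ≤ 5 * x + 2 at hw
  obtain ⟨j, rfl, hj⟩ | ⟨j, rfl, -⟩ | rfl := eq_of_armGraph_adj_inner h
  · have no_lower : ∀ j, fin5adj 0 j → ¬ innerLevel j ≤ 2 := by decide
    exact absurd (by simpa [armRank] using hw) (no_lower j hj)
  · obtain rfl := eq_zero_of_armRank_outer_lt (hw.trans_lt (by omega))
    exact .refl
  · simp [armRank] at hw

theorem inner_zero_dominatesBelow_inner (x : Fin n) (hi : fin5adj 0 i) :
    DominatesBelow (armGraph n) (armRank n) (.inner x 0) (.inner x i) := by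
  have hrank : armRank n (.inner x i) = 5 * x + 3 := by
    have : ∀ i, fin5adj 0 i → innerLevel i = 3 := by decide
    rw [armRank, this i hi]
  refine .of_adj (armGraph_adj_inner_inner.mpr ⟨rfl, hi⟩) fun w hw h => ?_
  rw [hrank] at hw
  obtain ⟨j, rfl, hj⟩ | ⟨j, rfl, -⟩ | rfl := eq_of_armGraph_adj_inner h
  · have lower : ∀ i j, fin5adj 0 i → fin5adj i j → innerLevel j ≤ 3 → j = 0 := by decide
    obtain rfl := lower i j hi hj (by simpa [armRank] using hw)
    exact .refl
  · obtain rfl := eq_zero_of_armRank_outer_lt (hw.trans_lt (by omega))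
    exact .single (armGraph_adj_inner_outer.mpr ⟨rfl, .inl rfl⟩)
  · exact .single (armGraph_adj_inner_center.mpr rfl)

theorem inner_zero_dominatesBelow_center (x : Fin n) :
    DominatesBelow (armGraph n) (armRank n) (.inner x 0) (.center x) := by
  refine .of_adj (armGraph_adj_inner_center.mpr rfl) fun w hw h => ?_
  obtain ⟨j, rfl⟩ := exists_eq_inner_of_armGraph_adj_center h
  have lower : ∀ j, innerLevel j ≤ 3 → j = 0 ∨ fin5adj 0 j := by decide
  obtain rfl | hj := lower j (by simpa [armRank] using hw)
  · exact .refl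
  · exact .single (armGraph_adj_inner_inner.mpr ⟨rfl, hj⟩)

theorem center_dominatesBelow_inner (x : Fin n) (hi : i ≠ 0) (hi_adj : ¬ fin5adj 0 i) :
    DominatesBelow (armGraph n) (armRank n) (.center x) (.inner x i) := by
  have hrank : armRank n (.inner x i) = 5 * x + 4 := by
    have : ∀ i, i ≠ 0 → ¬ fin5adj 0 i → innerLevel i = 4 := by decide
    rw [armRank, this i hi hi_adj]
  refine .of_adj (armGraph_adj_inner_center.mpr rfl).symm fun w hw h => ?_
  rw [hrank] at hw
  obtain ⟨j, rfl, -⟩ | ⟨j, rfl, hij⟩ | rfl := eq_of_armGraph_adj_inner h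
  · exact .single (armGraph_adj_inner_center.mpr rfl).symm
  · obtain rfl := eq_zero_of_armRank_outer_lt (hw.trans_lt (by omega))
    exact absurd hij (not_or.mpr ⟨hi, mt fin5adj_comm.mp hi_adj⟩)
  · exact .refl

/-- The dismantling of the arm graph onto `b₂⁻¹` with ranks `armRank` and folds `armFold`. -/
def armDismantling (n : ℕ) : Dismantling (armGraph n) .start where
  rank := armRank n
  fold := armFold n
  eq_root_of_rank_eq_zero := eq_start_of_armRank_eq_zero
  rank_fold_lt := armRank_armFold_lt
  dominatesBelow_fold {v} hv := by
    cases v with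
    | start => exact absurd rfl hv
    | finish => exact b2prev_dominatesBelow_finish
    | outer x i =>
      by_cases hi : i = 0
      · subst hi
        exact b2prev_dominatesBelow_outer_zero x
      · rw [armFold, if_neg hi]
        exact inner_dominatesBelow_outer x hi
    | inner x i =>
      match i with
      | 0 => exact outer_zero_dominatesBelow_inner_zero x
      | 1 | 4 => exact inner_zero_dominatesBelow_inner x (by decide)
      | 2 | 3 => exact center_dominatesBelow_inner x (by decide) (by decide)
    | center x => exact inner_zero_dominatesBelow_center x

end ArmGraph

/-- For every `n ≥ 0` the arm graph `A_n` has cop number 1; indeed a single cop starting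
at the vertex `b₂⁻¹` has a winning strategy on `A_n`. -/
theorem armGraph_cop_number (n : ℕ) :
    copNumber (armGraph n) = 1 ∧
      CopsCatchFrom (armGraph n) (fun _ : Fin 1 => ArmVert.start) := by
  have hcatch := (armDismantling n).copsCatchFrom armRank_le
  exact ⟨copNumber_eq_one_of_copsCatchFrom hcatch, hcatch⟩
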